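/- Let F(x,y) = (y, -x + s(y)). The map F is pointwise periodic: every q ∈ ℝ² satisfies F^p(q) = q for some p ≥ 1. Moreover, the set of minimal periods of points of F equals {4n+1 : n ∈ ℕ₀} ∪ {8n+4 : n ∈ ℕ₀} ∪ {8n+6 : n ∈ ℕ₀}. -/

import Mathlib

noncomputable def s (y : ℝ) : ℝ := if 0 ≤ y then 1 else -1

noncomputable def F (q : ℝ × ℝ) : ℝ × ℝ := (q.2, -q.1 + s q.2)

/-!
Cut the plane into unit squares along the integer grid. `F` permutes the squares and acts inside
each of them as a quarter turn about the centre, so the period of a point is the least common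
multiple of the period of its square and of the period, `1` or `4`, of its displacement from the
centre. The squares are in turn arranged in rings of `4 * k + 2` cyclically ordered squares, one
ring for each `k`, and `F` moves every square of the `k`-th ring by `k` places along the ring. Hence
a square of that ring has period `2 * k + 1` or `4 * k + 2` according to the parity of `k`, while
every point other than a centre has period `8 * k + 4`.
-/

open Function Set

theorem minimalPeriod_eq_of_injOn {α β : Type*} {f : α → α} {g : β → β} {φ : α → β} {S : Set α}
    (hφ : InjOn φ S) (hf : MapsTo f S S) (h : ∀ z ∈ S, g (φ z) = φ (f z)) {z : α} (hz : z ∈ S) :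
    minimalPeriod g (φ z) = minimalPeriod f z := by
  have iterate_eq (n : ℕ) : g^[n] (φ z) = φ (f^[n] z) := by
    induction n with
    | zero => rfl
    | succ n ih => rw [iterate_succ_apply', iterate_succ_apply', ih, h _ (hf.iterate n hz)]
  refine minimalPeriod_eq_minimalPeriod_iff.2 fun n => ?_
  rw [IsPeriodicPt, IsFixedPt, iterate_eq, hφ.eq_iff (hf.iterate n hz) hz]
  rfl

theorem minimalPeriod_eq_of_forall_isPeriodicPt_iff {α : Type*} {f : α → α} {x : α} {d : ℕ}
    (h : ∀ n, IsPeriodicPt f n x ↔ d ∣ n) : minimalPeriod f x = d :=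
  Nat.dvd_right_iff_eq.1 fun n => isPeriodicPt_iff_minimalPeriod_dvd.symm.trans (h n)

/-- The rotation by `-π / 2` about the origin. -/
def quarterTurn (w : ℝ × ℝ) : ℝ × ℝ := (w.2, -w.1)

theorem minimalPeriod_quarterTurn_zero : minimalPeriod quarterTurn 0 = 1 :=
  minimalPeriod_eq_one_iff_isFixedPt.2 (by simp [IsFixedPt, quarterTurn])

theorem minimalPeriod_quarterTurn {w : ℝ × ℝ} (hw : w ≠ 0) : minimalPeriod quarterTurn w = 4 := by
  refine minimalPeriod_eq_prime_pow (p := 2) (k := 1) (fun h => hw ?_) ?_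
  · have h : -w = w := h
    exact self_eq_neg.1 h.symm
  · simp [IsPeriodicPt, IsFixedPt, quarterTurn]

/-- `u` is the displacement from `n + 1/2` of a point of the `n`-th unit interval, where that
interval is `[n, n + 1]` for even `n` and `(n, n + 1)` for odd `n`. Every half-open choice would be
spoilt by the reflection `x ↦ -x`; this one makes the intervals a partition of the line and the
condition invariant under `u ↦ -u`. -/
def IsOffset (n : ℤ) (u : ℝ) : Prop := |u| ≤ 1 / 2 ∧ (Odd n → |u| < 1 / 2)

theorem isOffset_zero (n : ℤ) : IsOffset n 0 := by
  norm_num [IsOffset]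

theorem IsOffset.neg {n m : ℤ} {u : ℝ} (hu : IsOffset n u) (h : Odd m → Odd n) :
    IsOffset m (-u) := by
  rw [IsOffset, abs_neg]
  exact ⟨hu.1, hu.2 ∘ h⟩

theorem exists_isOffset_add (x : ℝ) : ∃ (n : ℤ) (u : ℝ), IsOffset n u ∧ n + 1 / 2 + u = x := by
  have hle := Int.floor_le x
  have hlt := Int.lt_floor_add_one x
  by_cases h : Odd ⌊x⌋ ∧ x = ⌊x⌋
  · refine ⟨⌊x⌋ - 1, 1 / 2, ⟨by norm_num, fun hodd => ?_⟩, ?_⟩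
    · exact absurd h.1 (by grind)
    · push_cast
      linarith [h.2]
  · refine ⟨⌊x⌋, x - ⌊x⌋ - 1 / 2, ⟨abs_le.2 ⟨by linarith, by linarith⟩, fun hodd => ?_⟩, by ring⟩
    have hlt' : (⌊x⌋ : ℝ) < x := hle.lt_of_ne fun heq => h ⟨hodd, heq.symm⟩
    exact abs_lt.2 ⟨by linarith, by linarith⟩

theorem IsOffset.index_eq {n m : ℤ} {u v : ℝ} (hu : IsOffset n u) (hv : IsOffset m v)
    (h : n + 1 / 2 + u = m + 1 / 2 + v) : n = m := by
  have hdist : ((|n - m| : ℤ) : ℝ) ≤ |u| + |v| := by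
    push_cast
    rw [show (n - m : ℝ) = v - u by linarith, add_comm]
    exact abs_sub v u
  have hle : |n - m| ≤ 1 := by
    exact_mod_cast (show ((|n - m| : ℤ) : ℝ) ≤ 1 by linarith [hu.1, hv.1])
  have hlt (hodd : Odd n ∨ Odd m) : |n - m| < 1 := by
    have : |u| + |v| < 1 := by
      rcases hodd with hn | hm
      · linarith [hu.2 hn, hv.1]
      · linarith [hu.1, hv.2 hm]
    exact_mod_cast hdist.trans_lt this
  by_contra hne
  have hpos : 1 ≤ |n - m| := Int.one_le_abs (sub_ne_zero.2 hne)
  have hodd : Odd n ∨ Odd m := by grind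
  exact (hlt hodd).not_ge hpos

theorem IsOffset.nonneg_iff {n : ℤ} {u : ℝ} (hu : IsOffset n u) :
    0 ≤ (n + 1 / 2 + u : ℝ) ↔ 0 ≤ n := by
  obtain ⟨hle, hge⟩ := abs_le.1 hu.1
  constructor
  · intro h
    by_contra! hn
    rcases (show n ≤ -1 by omega).lt_or_eq with hn | rfl
    · have : (n : ℝ) ≤ -2 := by exact_mod_cast (show n ≤ -2 by omega)
      linarith
    · have := (abs_lt.1 (hu.2 (by decide))).2
      push_cast at h
      linarith
  · intro hn
    have : (0 : ℝ) ≤ n := by exact_mod_cast hn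
    linarith

/-- The action of `F` on the unit squares: `(a, b)` is the square with centre
`(a + 1/2, b + 1/2)`. -/
def tileMap (t : ℤ × ℤ) : ℤ × ℤ := (t.2, if 0 ≤ t.2 then -t.1 else -t.1 - 2)

/-- The set of pairs `(t, w)` of a square and the displacement from its centre of one of its
points. -/
def tilePairs : Set ((ℤ × ℤ) × (ℝ × ℝ)) := {z | IsOffset z.1.1 z.2.1 ∧ IsOffset z.1.2 z.2.2}

/-- For `z = (t, w)`, the point at displacement `w` from the centre of the square `t`. -/
noncomputable def tilePoint (z : (ℤ × ℤ) × (ℝ × ℝ)) : ℝ × ℝ :=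
  (z.1.1 + 1 / 2 + z.2.1, z.1.2 + 1 / 2 + z.2.2)

theorem injOn_tilePoint : InjOn tilePoint tilePairs := by
  rintro ⟨⟨a, b⟩, u, v⟩ ⟨hu, hv⟩ ⟨⟨a', b'⟩, u', v'⟩ ⟨hu', hv'⟩ h
  obtain ⟨hx, hy⟩ := Prod.mk.inj h
  obtain rfl : a = a' := hu.index_eq hu' hx
  obtain rfl : b = b' := hv.index_eq hv' hy
  obtain rfl : u = u' := add_left_cancel hx
  obtain rfl : v = v' := add_left_cancel hy
  rfl

theorem surjOn_tilePoint : SurjOn tilePoint tilePairs univ := by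
  rintro ⟨x, y⟩ -
  obtain ⟨a, u, hu, rfl⟩ := exists_isOffset_add x
  obtain ⟨b, v, hv, rfl⟩ := exists_isOffset_add y
  exact ⟨((a, b), u, v), ⟨hu, hv⟩, rfl⟩

theorem mapsTo_tilePairs : MapsTo (Prod.map tileMap quarterTurn) tilePairs tilePairs := by
  rintro ⟨⟨a, b⟩, u, v⟩ ⟨hu, hv⟩
  refine ⟨hv, hu.neg ?_⟩
  simp only [Prod.map, tileMap]
  grind

theorem F_tilePoint {z : (ℤ × ℤ) × (ℝ × ℝ)} (hz : z ∈ tilePairs) :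
    F (tilePoint z) = tilePoint (Prod.map tileMap quarterTurn z) := by
  obtain ⟨⟨a, b⟩, u, v⟩ := z
  have hs : s (b + 1 / 2 + v) = if 0 ≤ b then 1 else -1 := if_congr hz.2.nonneg_iff rfl rfl
  simp only [F, tilePoint, Prod.map, tileMap, quarterTurn, hs, Prod.mk.injEq, true_and]
  split_ifs <;> push_cast <;> ring

theorem minimalPeriod_F_tilePoint {t : ℤ × ℤ} {w : ℝ × ℝ} (h : (t, w) ∈ tilePairs) :
    minimalPeriod F (tilePoint (t, w)) =
      (minimalPeriod tileMap t).lcm (minimalPeriod quarterTurn w) := by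
  rw [minimalPeriod_eq_of_injOn injOn_tilePoint mapsTo_tilePairs (fun _ => F_tilePoint) h,
    minimalPeriod_prodMap]

/-- The index `k` of the ring containing a square. It is the first integral `|a| + |b|`, corrected
in the open third quadrant because `tileMap` turns the lower half-plane about `(-1, -1)`; the
subtraction does not truncate. -/
def ringIndex (t : ℤ × ℤ) : ℕ :=
  if t.1 < 0 ∧ t.2 < 0 then t.1.natAbs + t.2.natAbs - 2 else t.1.natAbs + t.2.natAbs

/-- The place of a square in its ring, counted clockwise from the square `(0, k)`. -/
def ringPlace (t : ℤ × ℤ) : ℤ :=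
  if 0 ≤ t.1 then
    if 0 ≤ t.2 then t.1 else ringIndex t - t.2
  else
    if 0 ≤ t.2 then 3 * ringIndex t + 2 + t.2 else 2 * ringIndex t - t.1

theorem ringPlace_nonneg (t : ℤ × ℤ) : 0 ≤ ringPlace t := by
  unfold ringPlace ringIndex
  grind

theorem ringPlace_lt (t : ℤ × ℤ) : ringPlace t < 4 * ringIndex t + 2 := by
  unfold ringPlace ringIndex
  grind

theorem eq_of_ringIndex_eq_of_ringPlace_eq {t t' : ℤ × ℤ} (hi : ringIndex t = ringIndex t')
    (hp : ringPlace t = ringPlace t') : t = t' := by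
  unfold ringPlace ringIndex at *
  grind

theorem ringIndex_tileMap (t : ℤ × ℤ) : ringIndex (tileMap t) = ringIndex t := by
  unfold tileMap ringIndex
  grind

theorem ringPlace_tileMap (t : ℤ × ℤ) :
    ringPlace (tileMap t) = ringPlace t + ringIndex t ∨
      ringPlace (tileMap t) = ringPlace t + ringIndex t - (4 * ringIndex t + 2) := by
  unfold ringPlace
  rw [ringIndex_tileMap]
  unfold tileMap ringIndex
  grind

theorem ringPlace_tileMap_modEq (t : ℤ × ℤ) :
    ringPlace (tileMap t) ≡ ringPlace t + ringIndex t [ZMOD 4 * ringIndex t + 2] := by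
  rcases ringPlace_tileMap t with h | h <;> simp [h, Int.ModEq]

theorem ringIndex_iterate_tileMap (n : ℕ) (t : ℤ × ℤ) :
    ringIndex (tileMap^[n] t) = ringIndex t := by
  induction n with
  | zero => rfl
  | succ n ih => rw [iterate_succ_apply', ringIndex_tileMap, ih]

theorem ringPlace_iterate_tileMap_modEq (n : ℕ) (t : ℤ × ℤ) :
    ringPlace (tileMap^[n] t) ≡ ringPlace t + n * ringIndex t [ZMOD 4 * ringIndex t + 2] := by
  induction n with
  | zero => simp
  | succ n ih =>
    have hstep := ringPlace_tileMap_modEq (tileMap^[n] t)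
    rw [ringIndex_iterate_tileMap] at hstep
    rw [iterate_succ_apply']
    convert hstep.trans (ih.add_right _) using 1
    push_cast
    ring

theorem isPeriodicPt_tileMap_iff {n : ℕ} {t : ℤ × ℤ} :
    IsPeriodicPt tileMap n t ↔ 4 * ringIndex t + 2 ∣ n * ringIndex t := by
  have hindex := ringIndex_iterate_tileMap n t
  have hplace : tileMap^[n] t = t ↔
      ringPlace (tileMap^[n] t) ≡ ringPlace t [ZMOD 4 * ringIndex t + 2] := by
    refine ⟨fun h => by rw [h], fun h => eq_of_ringIndex_eq_of_ringPlace_eq hindex ?_⟩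
    have hlt := ringPlace_lt (tileMap^[n] t)
    rw [hindex] at hlt
    rwa [Int.ModEq, Int.emod_eq_of_lt (ringPlace_nonneg _) hlt,
      Int.emod_eq_of_lt (ringPlace_nonneg _) (ringPlace_lt _)] at h
  calc tileMap^[n] t = t
    _ ↔ ringPlace t + n * ringIndex t ≡ ringPlace t [ZMOD 4 * ringIndex t + 2] := by
      have hmod := ringPlace_iterate_tileMap_modEq n t
      exact hplace.trans ⟨hmod.symm.trans, hmod.trans⟩
    _ ↔ (4 * ringIndex t + 2 : ℤ) ∣ n * ringIndex t := by
      rw [Int.modEq_comm, Int.modEq_iff_dvd, add_sub_cancel_left]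
    _ ↔ 4 * ringIndex t + 2 ∣ n * ringIndex t := by norm_cast

theorem minimalPeriod_tileMap_of_even {t : ℤ × ℤ} (h : Even (ringIndex t)) :
    minimalPeriod tileMap t = 2 * ringIndex t + 1 := by
  obtain ⟨j, hj⟩ := h
  have hcop : (2 * ringIndex t + 1).Coprime j := by
    rw [hj, show 2 * (j + j) + 1 = 1 + 4 * j by ring]
    simp
  refine minimalPeriod_eq_of_forall_isPeriodicPt_iff fun n => ?_
  calc IsPeriodicPt tileMap n t
    _ ↔ 4 * ringIndex t + 2 ∣ n * ringIndex t := isPeriodicPt_tileMap_iff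
    _ ↔ 2 * (2 * ringIndex t + 1) ∣ 2 * (n * j) := by
      rw [show 2 * (n * j) = n * ringIndex t by rw [hj]; ring,
        show 2 * (2 * ringIndex t + 1) = 4 * ringIndex t + 2 by ring]
    _ ↔ 2 * ringIndex t + 1 ∣ n := by
      rw [Nat.mul_dvd_mul_iff_left two_pos, hcop.dvd_mul_right]

theorem minimalPeriod_tileMap_of_odd {t : ℤ × ℤ} (h : Odd (ringIndex t)) :
    minimalPeriod tileMap t = 4 * ringIndex t + 2 := by
  have hcop : (4 * ringIndex t + 2).Coprime (ringIndex t) := by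
    simpa using h
  refine minimalPeriod_eq_of_forall_isPeriodicPt_iff fun n => ?_
  rw [isPeriodicPt_tileMap_iff, hcop.dvd_mul_right]

theorem minimalPeriod_F_center (t : ℤ × ℤ) :
    minimalPeriod F (tilePoint (t, 0)) = minimalPeriod tileMap t := by
  rw [minimalPeriod_F_tilePoint ⟨isOffset_zero _, isOffset_zero _⟩, minimalPeriod_quarterTurn_zero,
    Nat.lcm_one_right]

theorem minimalPeriod_F_of_ne_center {t : ℤ × ℤ} {w : ℝ × ℝ} (h : (t, w) ∈ tilePairs)
    (hw : w ≠ 0) : minimalPeriod F (tilePoint (t, w)) = 8 * ringIndex t + 4 := by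
  have hcop : (2 * ringIndex t + 1).Coprime 2 := by simp
  rw [minimalPeriod_F_tilePoint h, minimalPeriod_quarterTurn hw]
  rcases Nat.even_or_odd (ringIndex t) with heven | hodd
  · rw [minimalPeriod_tileMap_of_even heven, (hcop.pow_right 2 : Nat.Coprime _ 4).lcm_eq_mul]
    ring
  · rw [minimalPeriod_tileMap_of_odd hodd,
      show 4 * ringIndex t + 2 = 2 * (2 * ringIndex t + 1) by ring, show 4 = 2 * 2 by rfl,
      Nat.lcm_mul_left, hcop.lcm_eq_mul]
    ring

theorem minimalPeriod_F_cases (q : ℝ × ℝ) :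
    (∃ n, minimalPeriod F q = 4 * n + 1) ∨ (∃ n, minimalPeriod F q = 8 * n + 4) ∨
      ∃ n, minimalPeriod F q = 8 * n + 6 := by
  obtain ⟨⟨t, w⟩, h, rfl⟩ := surjOn_tilePoint (mem_univ q)
  by_cases hw : w = 0
  · rw [hw, minimalPeriod_F_center]
    rcases Nat.even_or_odd (ringIndex t) with heven | hodd
    · rw [minimalPeriod_tileMap_of_even heven]
      exact .inl ⟨ringIndex t / 2, by grind⟩
    · rw [minimalPeriod_tileMap_of_odd hodd]
      exact .inr (.inr ⟨ringIndex t / 2, by grind⟩)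
  · exact .inr (.inl ⟨ringIndex t, minimalPeriod_F_of_ne_center h hw⟩)

theorem ringIndex_zero_natCast (n : ℕ) : ringIndex (0, n) = n := by
  simp [ringIndex]

theorem exists_minimalPeriod_F_eq_four_mul_add_one (n : ℕ) :
    ∃ q, minimalPeriod F q = 4 * n + 1 := by
  have heven : Even (ringIndex (0, (2 * n : ℕ))) := by
    rw [ringIndex_zero_natCast]
    exact even_two_mul n
  refine ⟨tilePoint ((0, (2 * n : ℕ)), 0), ?_⟩
  rw [minimalPeriod_F_center, minimalPeriod_tileMap_of_even heven, ringIndex_zero_natCast]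
  ring

theorem exists_minimalPeriod_F_eq_eight_mul_add_six (n : ℕ) :
    ∃ q, minimalPeriod F q = 8 * n + 6 := by
  have hodd : Odd (ringIndex (0, (2 * n + 1 : ℕ))) := by
    rw [ringIndex_zero_natCast]
    exact odd_two_mul_add_one n
  refine ⟨tilePoint ((0, (2 * n + 1 : ℕ)), 0), ?_⟩
  rw [minimalPeriod_F_center, minimalPeriod_tileMap_of_odd hodd, ringIndex_zero_natCast]
  ring

theorem exists_minimalPeriod_F_eq_eight_mul_add_four (n : ℕ) :
    ∃ q, minimalPeriod F q = 8 * n + 4 := by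
  have hmem : ((0, (n : ℤ)), ((1 / 4 : ℝ), (0 : ℝ))) ∈ tilePairs :=
    ⟨by norm_num [IsOffset, abs_of_pos], isOffset_zero _⟩
  refine ⟨tilePoint ((0, n), 1 / 4, 0), ?_⟩
  rw [minimalPeriod_F_of_ne_center hmem (by simp), ringIndex_zero_natCast]

/-- `F` is pointwise periodic, and its set of minimal periods equals
`{4n+1} ∪ {8n+4} ∪ {8n+6}` for `n ∈ ℕ₀`. -/
theorem pointwise_periodic_and_periods_pi_div_two :
    (∀ q : ℝ × ℝ, ∃ p : ℕ, 1 ≤ p ∧ F^[p] q = q) ∧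
    {p : ℕ | ∃ q : ℝ × ℝ, Function.minimalPeriod F q = p} =
      {p : ℕ | ∃ n : ℕ, p = 4 * n + 1} ∪
      {p : ℕ | ∃ n : ℕ, p = 8 * n + 4} ∪
      {p : ℕ | ∃ n : ℕ, p = 8 * n + 6} := by
  refine ⟨fun q => ⟨minimalPeriod F q, ?_, iterate_minimalPeriod⟩, ?_⟩
  · have := minimalPeriod_F_cases q
    omega
  · ext p
    simp only [mem_union, mem_ofPred_eq, or_assoc]
    constructor
    · rintro ⟨q, rfl⟩
      exact minimalPeriod_F_cases q
    · rintro (⟨n, rfl⟩ | ⟨n, rfl⟩ | ⟨n, rfl⟩)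
      · exact exists_minimalPeriod_F_eq_four_mul_add_one n
      · exact exists_minimalPeriod_F_eq_eight_mul_add_four n
      · exact exists_minimalPeriod_F_eq_eight_mul_add_six n
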